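/- Let K be a finite set, D : K → ℝ a nonnegative function, 𝒟 ∈ ℝ, and ĉ : K → ℝ a nonnegative function. Let G' ⊆ K and i_l ∈ G' satisfy Σ_{i ∈ G'} D(i) ≥ 𝒟 and Σ_{i ∈ G' \ {i_l}} D(i) < 𝒟. Let y assign a nonnegative real y_δ to each subset δ ⊆ K, with y_δ = 0 unless δ ⊆ G' \ {i_l}. Suppose (i) for every i ∈ G', ĉ(i) = Σ_{δ ⊆ K, i ∉ δ} y_δ · min(D(i), 𝒟 − Σ_{i' ∈ δ} D(i')) (tightness on selected devices), and (ii) for every i ∈ K, Σ_{δ ⊆ K, i ∉ δ} y_δ · min(D(i), 𝒟 − Σ_{i' ∈ δ} D(i')) ≤ ĉ(i) (dual feasibility). Then for every G* ⊆ K with Σ_{i ∈ G*} D(i) ≥ 𝒟, it holds that Σ_{i ∈ G'} ĉ(i) ≤ 2 · Σ_{i ∈ G*} ĉ(i). -/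

import Mathlib

/-!
The dual objective `∑ δ, y δ * R δ`, where `R δ` is the residual demand, separates the two costs.
A feasible set covers `R δ` by truncated sizes of devices outside `δ`, so dual feasibility makes its
cost at least the dual objective. In the greedy set, the devices outside `δ` other than the last one
`l` have total size at most `R δ`, and truncation limits `l` itself to `R δ`; hence tightness makes
the greedy cost at most twice the dual objective.
-/

section Truncation

theorem min_add_le_min_add_min {M : Type*} [AddCommMonoid M] [LinearOrder M]
    [IsOrderedAddMonoid M] {a b r : M} (ha : 0 ≤ a) (hb : 0 ≤ b) (hr : 0 ≤ r) :
    min (a + b) r ≤ min a r + min b r := by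
  rcases le_total r a with hra | har
  · rw [min_eq_right hra]
    exact (min_le_right _ _).trans (le_add_of_nonneg_right (le_min hb hr))
  rcases le_total r b with hrb | hbr
  · rw [min_eq_right hrb]
    exact (min_le_right _ _).trans (le_add_of_nonneg_left (le_min ha hr))
  · rw [min_eq_left har, min_eq_left hbr]
    exact min_le_left _ _

theorem min_sum_le_sum_min {ι M : Type*} [AddCommMonoid M] [LinearOrder M]
    [IsOrderedAddMonoid M] {s : Finset ι} {f : ι → M} {r : M}
    (hf : ∀ i ∈ s, 0 ≤ f i) (hr : 0 ≤ r) :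
    min (∑ i ∈ s, f i) r ≤ ∑ i ∈ s, min (f i) r :=
  Finset.le_sum_of_subadditive_on_pred (fun x => min x r) (0 ≤ ·) (min_eq_left hr).le
    (fun _ _ ha hb => min_add_le_min_add_min ha hb hr) (fun _ _ => add_nonneg) f hf

end Truncation

section ResidualDemand

variable {α M : Type*} [AddCommGroup M] {D : α → M} {𝒟 : M} {G δ : Finset α}

/-- The residual requirement `R(δ) = 𝒟 - D(δ)` once the devices in `δ` are chosen. It is negative
when `δ` exceeds the requirement. -/
def residualDemand (D : α → M) (𝒟 : M) (δ : Finset α) : M :=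
  𝒟 - ∑ i ∈ δ, D i

/-- The truncated size `s^δ(i) = min (D i) (R(δ))`, the useful contribution of device `i` once the
devices in `δ` are chosen. -/
def truncatedSize [LinearOrder M] (D : α → M) (𝒟 : M) (δ : Finset α) (i : α) : M :=
  min (D i) (residualDemand D 𝒟 δ)

theorem sum_sdiff_le_residualDemand [DecidableEq α] [PartialOrder M] [IsOrderedAddMonoid M]
    (hδ : δ ⊆ G) (hG : ∑ i ∈ G, D i ≤ 𝒟) : ∑ i ∈ G \ δ, D i ≤ residualDemand D 𝒟 δ := by
  rw [Finset.sum_sdiff_eq_sub hδ]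
  exact sub_le_sub_right hG _

theorem residualDemand_nonneg [PartialOrder M] [IsOrderedAddMonoid M]
    (hD : ∀ i ∈ G, 0 ≤ D i) (hδ : δ ⊆ G) (hG : ∑ i ∈ G, D i ≤ 𝒟) : 0 ≤ residualDemand D 𝒟 δ :=
  sub_nonneg.mpr
    ((Finset.sum_le_sum_of_subset_of_nonneg hδ fun i hi _ => hD i hi).trans hG)

theorem residualDemand_le_sum_sdiff [DecidableEq α] [PartialOrder M] [IsOrderedAddMonoid M]
    (hD : ∀ i ∈ δ, 0 ≤ D i) (hG : 𝒟 ≤ ∑ i ∈ G, D i) :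
    residualDemand D 𝒟 δ ≤ ∑ i ∈ G \ δ, D i :=
  calc residualDemand D 𝒟 δ ≤ ∑ i ∈ G, D i - ∑ i ∈ δ, D i := sub_le_sub_right hG _
    _ = ∑ i ∈ G \ δ, D i - ∑ i ∈ δ \ G, D i := Finset.sum_sdiff_sub_sum_sdiff.symm
    _ ≤ ∑ i ∈ G \ δ, D i :=
      sub_le_self _ (Finset.sum_nonneg fun i hi => hD i (Finset.mem_sdiff.mp hi).1)

variable [DecidableEq α] [LinearOrder M] [IsOrderedAddMonoid M]

theorem residualDemand_le_sum_truncatedSize (hDG : ∀ i ∈ G, 0 ≤ D i) (hDδ : ∀ i ∈ δ, 0 ≤ D i)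
    (hres : 0 ≤ residualDemand D 𝒟 δ) (hG : 𝒟 ≤ ∑ i ∈ G, D i) :
    residualDemand D 𝒟 δ ≤ ∑ i ∈ G \ δ, truncatedSize D 𝒟 δ i :=
  calc residualDemand D 𝒟 δ = min (∑ i ∈ G \ δ, D i) (residualDemand D 𝒟 δ) :=
        (min_eq_right (residualDemand_le_sum_sdiff hDδ hG)).symm
    _ ≤ ∑ i ∈ G \ δ, truncatedSize D 𝒟 δ i :=
        min_sum_le_sum_min (fun i hi => hDG i (Finset.mem_sdiff.mp hi).1) hres

theorem sum_truncatedSize_le_two_nsmul_residualDemand {l : α} (hl : l ∈ G)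
    (hG : ∑ i ∈ G.erase l, D i ≤ 𝒟) (hδ : δ ⊆ G.erase l) :
    ∑ i ∈ G \ δ, truncatedSize D 𝒟 δ i ≤ 2 • residualDemand D 𝒟 δ := by
  have hl_sdiff : l ∈ G \ δ :=
    Finset.mem_sdiff.mpr ⟨hl, fun h => Finset.notMem_erase l G (hδ h)⟩
  have herase : ∑ i ∈ (G \ δ).erase l, truncatedSize D 𝒟 δ i ≤ residualDemand D 𝒟 δ := by
    rw [← Finset.erase_sdiff_comm]
    exact (Finset.sum_le_sum fun i _ => min_le_left _ _).trans (sum_sdiff_le_residualDemand hδ hG)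
  rw [← Finset.sum_erase_add _ _ hl_sdiff, two_nsmul]
  exact add_le_add herase (min_le_right _ _)

end ResidualDemand

section Dual

variable {α R : Type*} [Ring R] {K G : Finset α} {D c : α → R} {𝒟 : R} {y : Finset α → R}

/-- The objective `∑ y_δ R(δ)` of the dual of the knapsack-cover relaxation, over all `δ ⊆ K`. -/
def dualValue (K : Finset α) (D : α → R) (𝒟 : R) (y : Finset α → R) : R :=
  ∑ δ ∈ K.powerset, y δ * residualDemand D 𝒟 δ

variable [DecidableEq α] [LinearOrder R]

/-- The left-hand side `∑_{δ ∌ i} y_δ s^δ(i)` of the dual constraint of device `i`, over `δ ⊆ K`;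
`y` is dual feasible when it is at most the cost of `i`, and `i` is tight when they are equal. -/
def dualLoad (K : Finset α) (D : α → R) (𝒟 : R) (y : Finset α → R) (i : α) : R :=
  ∑ δ ∈ K.powerset with i ∉ δ, y δ * truncatedSize D 𝒟 δ i

theorem sum_dualLoad (K : Finset α) (D : α → R) (𝒟 : R) (y : Finset α → R) (G : Finset α) :
    ∑ i ∈ G, dualLoad K D 𝒟 y i =
      ∑ δ ∈ K.powerset, y δ * ∑ i ∈ G \ δ, truncatedSize D 𝒟 δ i := by
  simp_rw [dualLoad, Finset.mul_sum]
  apply Finset.sum_comm'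
  intro i δ
  simp only [Finset.mem_filter, Finset.mem_sdiff]
  tauto

variable [IsOrderedRing R]

theorem dualValue_le_sum_cost (hD : ∀ i ∈ K, 0 ≤ D i) (hy : ∀ δ ∈ K.powerset, 0 ≤ y δ)
    (hres : ∀ δ ∈ K.powerset, y δ ≠ 0 → 0 ≤ residualDemand D 𝒟 δ)
    (hGK : G ⊆ K) (hdual : ∀ i ∈ G, dualLoad K D 𝒟 y i ≤ c i) (hfeas : 𝒟 ≤ ∑ i ∈ G, D i) :
    dualValue K D 𝒟 y ≤ ∑ i ∈ G, c i := by
  refine le_trans ?_ (Finset.sum_le_sum hdual)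
  rw [sum_dualLoad]
  refine Finset.sum_le_sum fun δ hδ => ?_
  rcases eq_or_ne (y δ) 0 with hyδ | hyδ
  · simp [hyδ]
  · have hDδ : ∀ i ∈ δ, 0 ≤ D i := fun i hi => hD i (Finset.mem_powerset.mp hδ hi)
    have hDG : ∀ i ∈ G, 0 ≤ D i := fun i hi => hD i (hGK hi)
    exact mul_le_mul_of_nonneg_left
      (residualDemand_le_sum_truncatedSize hDG hDδ (hres δ hδ hyδ) hfeas) (hy δ hδ)

theorem sum_cost_le_two_mul_dualValue {l : α} (hl : l ∈ G) (hG : ∑ i ∈ G.erase l, D i ≤ 𝒟)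
    (hy : ∀ δ ∈ K.powerset, 0 ≤ y δ) (hsupp : ∀ δ ∈ K.powerset, ¬ δ ⊆ G.erase l → y δ = 0)
    (htight : ∀ i ∈ G, c i ≤ dualLoad K D 𝒟 y i) :
    ∑ i ∈ G, c i ≤ 2 * dualValue K D 𝒟 y := by
  refine (Finset.sum_le_sum htight).trans ?_
  rw [sum_dualLoad, two_mul, ← two_nsmul, dualValue, Finset.smul_sum]
  refine Finset.sum_le_sum fun δ hδ => ?_
  by_cases hδG : δ ⊆ G.erase l
  · rw [← mul_smul_comm]
    exact mul_le_mul_of_nonneg_left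
      (sum_truncatedSize_le_two_nsmul_residualDemand hl hG hδG) (hy δ hδ)
  · simp [hsupp δ hδ hδG]

theorem greedy_cost_le_two_opt_general (hD : ∀ i ∈ K, 0 ≤ D i) (hGK : G ⊆ K) {l : α} (hl : l ∈ G)
    (hG : ∑ i ∈ G.erase l, D i ≤ 𝒟) (hy : ∀ δ ∈ K.powerset, 0 ≤ y δ)
    (hsupp : ∀ δ ∈ K.powerset, ¬ δ ⊆ G.erase l → y δ = 0)
    (htight : ∀ i ∈ G, c i ≤ dualLoad K D 𝒟 y i)
    (hdual : ∀ i ∈ K, dualLoad K D 𝒟 y i ≤ c i)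
    {Gstar : Finset α} (hGstarK : Gstar ⊆ K) (hfeas : 𝒟 ≤ ∑ i ∈ Gstar, D i) :
    ∑ i ∈ G, c i ≤ 2 * ∑ i ∈ Gstar, c i := by
  have hres : ∀ δ ∈ K.powerset, y δ ≠ 0 → 0 ≤ residualDemand D 𝒟 δ := fun δ hδ hyδ =>
    have hδG : δ ⊆ G.erase l := of_not_not (mt (hsupp δ hδ) hyδ)
    residualDemand_nonneg (fun i hi => hD i (hGK (Finset.mem_of_mem_erase hi))) hδG hG
  calc ∑ i ∈ G, c i ≤ 2 * dualValue K D 𝒟 y :=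
        sum_cost_le_two_mul_dualValue hl hG hy hsupp htight
    _ ≤ 2 * ∑ i ∈ Gstar, c i :=
        mul_le_mul_of_nonneg_left
          (dualValue_le_sum_cost hD hy hres hGstarK (fun i hi => hdual i (hGstarK hi)) hfeas)
          zero_le_two

end Dual

/-- Primal-dual bound (inequality (3) of Theorem 1): if `G' ⊆ K` is the feasible set
produced by the greedy run with last added device `i_l`, and `y` is a nonnegative dual
solution supported on subsets of `G' \ {i_l}` that is dual-feasible and tight on every
selected device, then the cost of `G'` is at most twice the cost of any feasible `G*`. -/
theorem greedy_cost_le_two_opt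
    {α : Type*} [DecidableEq α] (K : Finset α) (D : α → ℝ)
    (hD : ∀ i ∈ K, 0 ≤ D i) (𝒟 : ℝ)
    (chat : α → ℝ) (hchat : ∀ i ∈ K, 0 ≤ chat i)
    (G' : Finset α) (hG'K : G' ⊆ K) (il : α) (hil : il ∈ G')
    (hfeasG' : 𝒟 ≤ ∑ i ∈ G', D i) (hlt : ∑ i ∈ G'.erase il, D i < 𝒟)
    (y : Finset α → ℝ)
    (hy : ∀ δ ∈ K.powerset, 0 ≤ y δ)
    (hsupp : ∀ δ ∈ K.powerset, ¬ δ ⊆ G'.erase il → y δ = 0)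
    (htight : ∀ i ∈ G',
      chat i = ∑ δ ∈ K.powerset.filter (fun δ => i ∉ δ),
        y δ * min (D i) (𝒟 - ∑ i' ∈ δ, D i'))
    (hdual : ∀ i ∈ K,
      ∑ δ ∈ K.powerset.filter (fun δ => i ∉ δ),
        y δ * min (D i) (𝒟 - ∑ i' ∈ δ, D i') ≤ chat i)
    (Gstar : Finset α) (hGK : Gstar ⊆ K) (hfeas : 𝒟 ≤ ∑ i ∈ Gstar, D i) :
    ∑ i ∈ G', chat i ≤ 2 * ∑ i ∈ Gstar, chat i := by
  exact greedy_cost_le_two_opt_general hD hG'K hil hlt.le hy hsupp (fun i hi => (htight i hi).le)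
    hdual hGK hfeas
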